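/- arXiv:2406.10578 — 2 statements merged into one kernel-verified Lean document; each statement's English description precedes it below -/
import Mathlib

section
/- Let F(x,y) = r·φ(u,s,v,t) be a general spherically symmetric metric on a domain of ℝⁿ. At any point (x,y) with y ≠ 0 where φ is smooth, for every index l: Σ_k (∂²F/∂x^k∂y^l)·y^k − ∂F/∂x^l = r(2sφ_us + φ_ss + tφ_sv − 2φ_u)·(x_l − s·y_l/r) + r(2sφ_ut + φ_st + tφ_vt − φ_v)·(a_l − t·y_l/r). -/
/-!
Write `r = |y|` and `s_l = x_l - s y_l / r`, `t_l = a_l - t y_l / r`. The identity is the chain rule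
applied twice. In `x` it gives
`F_{x^k} = 2 r φ_u x_k + φ_s y_k + r φ_v a_k` (`fderiv_Fm_left`), valid for every `y ≠ 0`.
Since `∂r/∂y^l = y_l / r`, `∂s/∂y^l = s_l / r` and `∂t/∂y^l = t_l / r`, differentiating this in `y^l`
(`fderiv_fderiv_Fm`) and contracting with `y^k` by means of `⟨x,y⟩ = s r`, `⟨a,y⟩ = t r`,
`⟨y,y⟩ = r²` gives the result: the `φ_s y_l` terms cancel, and the terms `-2 r φ_u x_l` and
`-r φ_v a_l` combine with the derivatives of `r` into multiples of `s_l` and `t_l`.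
The only use of second-order regularity beyond differentiability of the first partials is the
symmetry `φ_{vs} = φ_{sv}` (`pds_pdv`).
-/

noncomputable section

open scoped BigOperators

namespace GSSFinsler

/-- `k`-th standard basis vector of `ℝⁿ`. -/
def bvec (n : ℕ) (k : Fin n) : Fin n → ℝ := Pi.single k 1

/-- Standard inner product on `ℝⁿ`. -/
def ip {n : ℕ} (x y : Fin n → ℝ) : ℝ := ∑ i, x i * y i

/-- Euclidean norm on `ℝⁿ`. -/
def nrm {n : ℕ} (y : Fin n → ℝ) : ℝ := Real.sqrt (ip y y)

/-! Partial derivative operators on a smooth function of four real variables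
`φ = φ(u, s, v, t)`. -/

def pdu (f : ℝ → ℝ → ℝ → ℝ → ℝ) (u s v t : ℝ) : ℝ := deriv (fun z => f z s v t) u
def pds (f : ℝ → ℝ → ℝ → ℝ → ℝ) (u s v t : ℝ) : ℝ := deriv (fun z => f u z v t) s
def pdv (f : ℝ → ℝ → ℝ → ℝ → ℝ) (u s v t : ℝ) : ℝ := deriv (fun z => f u s z t) v
def pdt (f : ℝ → ℝ → ℝ → ℝ → ℝ) (u s v t : ℝ) : ℝ := deriv (fun z => f u s v z) t

/-- `u := |x|²`. -/
def uu {n : ℕ} (x : Fin n → ℝ) : ℝ := ip x x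
/-- `s := ⟨x,y⟩/|y|`. -/
def sc {n : ℕ} (x y : Fin n → ℝ) : ℝ := ip x y / nrm y
/-- `v := ⟨a,x⟩`. -/
def vc {n : ℕ} (a x : Fin n → ℝ) : ℝ := ip a x
/-- `t := ⟨a,y⟩/|y|`. -/
def tc {n : ℕ} (a y : Fin n → ℝ) : ℝ := ip a y / nrm y

/-- Evaluation of a function of `(u,s,v,t)` at the point determined by `(a,x,y)`. -/
def ev {n : ℕ} (f : ℝ → ℝ → ℝ → ℝ → ℝ) (a x y : Fin n → ℝ) : ℝ :=
  f (uu x) (sc x y) (vc a x) (tc a y)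

/-- The general spherically symmetric metric `F(x,y) = |y| φ(u,s,v,t)`. -/
def Fm {n : ℕ} (φ : ℝ → ℝ → ℝ → ℝ → ℝ) (a x y : Fin n → ℝ) : ℝ :=
  nrm y * φ (uu x) (sc x y) (vc a x) (tc a y)

/-- Fundamental tensor `g_{ij} := ½ ∂²(F²)/∂y^i∂y^j`. -/
def gm {n : ℕ} (φ : ℝ → ℝ → ℝ → ℝ → ℝ) (a x y : Fin n → ℝ) (i j : Fin n) : ℝ :=
  (1/2) * fderiv ℝ (fun z => fderiv ℝ (fun w => (Fm φ a x w)^2) z (bvec n j)) y (bvec n i)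

/-- Cartan tensor `C_{ijk} := ½ ∂g_{ij}/∂y^k`. -/
def cart {n : ℕ} (φ : ℝ → ℝ → ℝ → ℝ → ℝ) (a x y : Fin n → ℝ) (i j k : Fin n) : ℝ :=
  (1/2) * fderiv ℝ (fun z => gm φ a x z i j) y (bvec n k)

/-- Angular metric `h_{ij} := g_{ij} − F_{y^i}F_{y^j}`. -/
def ang {n : ℕ} (φ : ℝ → ℝ → ℝ → ℝ → ℝ) (a x y : Fin n → ℝ) (i j : Fin n) : ℝ :=
  gm φ a x y i j -
    fderiv ℝ (fun w => Fm φ a x w) y (bvec n i) *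
      fderiv ℝ (fun w => Fm φ a x w) y (bvec n j)

/-- The fundamental tensor as a matrix. -/
def gMat {n : ℕ} (φ : ℝ → ℝ → ℝ → ℝ → ℝ) (a x y : Fin n → ℝ) :
    Matrix (Fin n) (Fin n) ℝ :=
  Matrix.of fun i j => gm φ a x y i j

/-- The inverse fundamental tensor `g^{ij}`. -/
def gInv {n : ℕ} (φ : ℝ → ℝ → ℝ → ℝ → ℝ) (a x y : Fin n → ℝ) :
    Matrix (Fin n) (Fin n) ℝ :=
  (gMat φ a x y)⁻¹

/-- Mean Cartan torsion `I_k := g^{jl} C_{jlk}`. -/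
def mci {n : ℕ} (φ : ℝ → ℝ → ℝ → ℝ → ℝ) (a x y : Fin n → ℝ) (k : Fin n) : ℝ :=
  ∑ j, ∑ l, gInv φ a x y j l * cart φ a x y j l k

/-- Squared norm `‖I‖² := g^{ij} I_i I_j` of the mean Cartan torsion. -/
def normI2 {n : ℕ} (φ : ℝ → ℝ → ℝ → ℝ → ℝ) (a x y : Fin n → ℝ) : ℝ :=
  ∑ i, ∑ j, gInv φ a x y i j * mci φ a x y i * mci φ a x y j

/-- `s_i := x_i − s·y_i/r`. -/
def sv {n : ℕ} (x y : Fin n → ℝ) (i : Fin n) : ℝ := x i - sc x y * (y i / nrm y)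
/-- `t_i := a_i − t·y_i/r`. -/
def tv {n : ℕ} (a y : Fin n → ℝ) (i : Fin n) : ℝ := a i - tc a y * (y i / nrm y)

/-- `‖𝔖‖² := g^{ij}s_is_j`. -/
def nS2 {n : ℕ} (φ : ℝ → ℝ → ℝ → ℝ → ℝ) (a x y : Fin n → ℝ) : ℝ :=
  ∑ i, ∑ j, gInv φ a x y i j * sv x y i * sv x y j
/-- `‖ℜ‖² := g^{ij}s_it_j`. -/
def nR2 {n : ℕ} (φ : ℝ → ℝ → ℝ → ℝ → ℝ) (a x y : Fin n → ℝ) : ℝ :=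
  ∑ i, ∑ j, gInv φ a x y i j * sv x y i * tv a y j
/-- `‖𝔗‖² := g^{ij}t_it_j`. -/
def nT2 {n : ℕ} (φ : ℝ → ℝ → ℝ → ℝ → ℝ) (a x y : Fin n → ℝ) : ℝ :=
  ∑ i, ∑ j, gInv φ a x y i j * tv a y i * tv a y j

/-! The scalars `σ₁, …, σ₁₁` as functions of `(u,s,v,t)`.  Subscripts on `φ`
denote partial derivatives; `φ_{st}` is `pdt (pds φ)` (first `s`, then `t`),
`φ_{ts}` is `pds (pdt φ)`, etc. -/

def sig1 (φ : ℝ → ℝ → ℝ → ℝ → ℝ) (u s v t : ℝ) : ℝ :=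
  φ u s v t - s * pds φ u s v t - t * pdt φ u s v t

def sig2 (φ : ℝ → ℝ → ℝ → ℝ → ℝ) (u s v t : ℝ) : ℝ :=
  sig1 φ u s v t * pds φ u s v t - s * φ u s v t * pds (pds φ) u s v t -
    t * φ u s v t * pds (pdt φ) u s v t

def sig3 (φ : ℝ → ℝ → ℝ → ℝ → ℝ) (u s v t : ℝ) : ℝ :=
  sig1 φ u s v t * pdt φ u s v t - s * φ u s v t * pdt (pds φ) u s v t -
    t * φ u s v t * pdt (pdt φ) u s v t

def sig4 (φ : ℝ → ℝ → ℝ → ℝ → ℝ) (u s v t : ℝ) : ℝ :=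
  3 * pds φ u s v t * pds (pds φ) u s v t + φ u s v t * pds (pds (pds φ)) u s v t

def sig5 (φ : ℝ → ℝ → ℝ → ℝ → ℝ) (u s v t : ℝ) : ℝ :=
  3 * pdt φ u s v t * pdt (pdt φ) u s v t + φ u s v t * pdt (pdt (pdt φ)) u s v t

def sig6 (φ : ℝ → ℝ → ℝ → ℝ → ℝ) (u s v t : ℝ) : ℝ :=
  2 * pds φ u s v t * pdt (pds φ) u s v t + pdt φ u s v t * pds (pds φ) u s v t +
    φ u s v t * pdt (pds (pds φ)) u s v t

def sig7 (φ : ℝ → ℝ → ℝ → ℝ → ℝ) (u s v t : ℝ) : ℝ :=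
  2 * pdt φ u s v t * pds (pdt φ) u s v t + pds φ u s v t * pdt (pdt φ) u s v t +
    φ u s v t * pds (pdt (pdt φ)) u s v t

def sig8 (φ : ℝ → ℝ → ℝ → ℝ → ℝ) (u s v t : ℝ) : ℝ :=
  φ u s v t * (sig1 φ u s v t * sig4 φ u s v t - 3 * sig2 φ u s v t * pds (pds φ) u s v t)

def sig9 (φ : ℝ → ℝ → ℝ → ℝ → ℝ) (u s v t : ℝ) : ℝ :=
  φ u s v t * (sig1 φ u s v t * sig5 φ u s v t - 3 * sig3 φ u s v t * pdt (pdt φ) u s v t)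

def sig10 (φ : ℝ → ℝ → ℝ → ℝ → ℝ) (u s v t : ℝ) : ℝ :=
  φ u s v t * (sig1 φ u s v t * sig6 φ u s v t - 2 * sig2 φ u s v t * pdt (pds φ) u s v t -
    sig3 φ u s v t * pds (pds φ) u s v t)

def sig11 (φ : ℝ → ℝ → ℝ → ℝ → ℝ) (u s v t : ℝ) : ℝ :=
  φ u s v t * (sig1 φ u s v t * sig7 φ u s v t - 2 * sig3 φ u s v t * pds (pdt φ) u s v t -
    sig2 φ u s v t * pdt (pdt φ) u s v t)

/-- The scalar `H` of Lemma 3.2. -/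
def Hc {n : ℕ} (φ : ℝ → ℝ → ℝ → ℝ → ℝ) (a x y : Fin n → ℝ) : ℝ :=
  ((n : ℝ) + 1) * (ev (pds φ) a x y / ev φ a x y +
      ev (pds (sig1 φ)) a x y / ev (sig1 φ) a x y) +
  nS2 φ a x y * (ev (pds (pds (pds φ))) a x y -
      3 * ev (pds (sig1 φ)) a x y * ev (pds (pds φ)) a x y / ev (sig1 φ) a x y) * ev φ a x y +
  2 * nR2 φ a x y * (ev (pdt (pds (pds φ))) a x y -
      (2 * ev (pds (sig1 φ)) a x y * ev (pdt (pds φ)) a x y +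
        ev (pdt (sig1 φ)) a x y * ev (pds (pds φ)) a x y) / ev (sig1 φ) a x y) * ev φ a x y +
  nT2 φ a x y * (ev (pds (pdt (pdt φ))) a x y -
      (2 * ev (pdt (sig1 φ)) a x y * ev (pds (pdt φ)) a x y +
        ev (pds (sig1 φ)) a x y * ev (pdt (pdt φ)) a x y) / ev (sig1 φ) a x y) * ev φ a x y

/-- The scalar `K` of Lemma 3.2. -/
def Kc {n : ℕ} (φ : ℝ → ℝ → ℝ → ℝ → ℝ) (a x y : Fin n → ℝ) : ℝ :=
  ((n : ℝ) + 1) * (ev (pdt φ) a x y / ev φ a x y +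
      ev (pdt (sig1 φ)) a x y / ev (sig1 φ) a x y) +
  nT2 φ a x y * (ev (pdt (pdt (pdt φ))) a x y -
      3 * ev (pdt (sig1 φ)) a x y * ev (pdt (pdt φ)) a x y / ev (sig1 φ) a x y) * ev φ a x y +
  nS2 φ a x y * (ev (pdt (pds (pds φ))) a x y -
      (2 * ev (pds (sig1 φ)) a x y * ev (pdt (pds φ)) a x y +
        ev (pdt (sig1 φ)) a x y * ev (pds (pds φ)) a x y) / ev (sig1 φ) a x y) * ev φ a x y +
  2 * nR2 φ a x y * (ev (pds (pdt (pdt φ))) a x y -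
      (2 * ev (pdt (sig1 φ)) a x y * ev (pds (pdt φ)) a x y +
        ev (pds (sig1 φ)) a x y * ev (pdt (pdt φ)) a x y) / ev (sig1 φ) a x y) * ev φ a x y

/-- The scalar `M` appearing in the proof of Theorem 1.1. -/
def Mc {n : ℕ} (φ : ℝ → ℝ → ℝ → ℝ → ℝ) (a x y : Fin n → ℝ) : ℝ :=
  ev (sig2 φ) a x y * (ev (sig1 φ) a x y * ((n : ℝ) - 2) * ev φ a x y +
      (ip a a - tc a y ^ 2) * ev φ a x y * ev (pdt (pdt φ)) a x y +
      (vc a x - sc x y * tc a y) * ev φ a x y * ev (pdt (pds φ)) a x y) -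
  ev (sig3 φ) a x y * ((vc a x - sc x y * tc a y) * ev φ a x y * ev (pds (pds φ)) a x y +
      (ip a a - tc a y ^ 2) * ev φ a x y * ev (pdt (pds φ)) a x y) +
  ev (sig10 φ) a x y * (vc a x - sc x y * tc a y) -
  ev (sig11 φ) a x y * (ip a a - tc a y ^ 2)

/-- The scalar `N` appearing in the proof of Theorem 1.1. -/
def Nc {n : ℕ} (φ : ℝ → ℝ → ℝ → ℝ → ℝ) (a x y : Fin n → ℝ) : ℝ :=
  ev (sig2 φ) a x y * ((vc a x - sc x y * tc a y) * ev φ a x y * ev (pdt (pdt φ)) a x y +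
      (uu x - sc x y ^ 2) * ev φ a x y * ev (pdt (pds φ)) a x y) -
  ev (sig3 φ) a x y * (ev (sig1 φ) a x y * ((n : ℝ) - 2) * ev φ a x y +
      (uu x - sc x y ^ 2) * ev φ a x y * ev (pds (pds φ)) a x y +
      (vc a x - sc x y * tc a y) * ev φ a x y * ev (pdt (pds φ)) a x y) +
  ev (sig10 φ) a x y * (uu x - sc x y ^ 2) -
  ev (sig11 φ) a x y * (vc a x - sc x y * tc a y)

end GSSFinsler

namespace GSSFinsler

/-! ### Partial derivatives of a function of four variables -/

/-- A function of four real variables, viewed as a function on `ℝ × ℝ × ℝ × ℝ`. -/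
def unc (f : ℝ → ℝ → ℝ → ℝ → ℝ) (p : ℝ × ℝ × ℝ × ℝ) : ℝ := f p.1 p.2.1 p.2.2.1 p.2.2.2

section partials

variable {f : ℝ → ℝ → ℝ → ℝ → ℝ}

lemma pdu_eq (hf : Differentiable ℝ (unc f)) (u s v t : ℝ) :
    pdu f u s v t = fderiv ℝ (unc f) (u, s, v, t) (1, 0, 0, 0) := by
  have h : HasDerivAt (fun z : ℝ => (z, s, v, t)) ((1 : ℝ), (0 : ℝ), (0 : ℝ), (0 : ℝ)) u :=
    (hasDerivAt_id u).prodMk (hasDerivAt_const u _)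
  exact ((hf (u, s, v, t)).hasFDerivAt.comp_hasDerivAt u h).deriv

lemma pds_eq (hf : Differentiable ℝ (unc f)) (u s v t : ℝ) :
    pds f u s v t = fderiv ℝ (unc f) (u, s, v, t) (0, 1, 0, 0) := by
  have h : HasDerivAt (fun z : ℝ => (u, z, v, t)) ((0 : ℝ), (1 : ℝ), (0 : ℝ), (0 : ℝ)) s :=
    (hasDerivAt_const s _).prodMk ((hasDerivAt_id s).prodMk (hasDerivAt_const s _))
  exact ((hf (u, s, v, t)).hasFDerivAt.comp_hasDerivAt s h).deriv

lemma pdv_eq (hf : Differentiable ℝ (unc f)) (u s v t : ℝ) :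
    pdv f u s v t = fderiv ℝ (unc f) (u, s, v, t) (0, 0, 1, 0) := by
  have h : HasDerivAt (fun z : ℝ => (u, s, z, t)) ((0 : ℝ), (0 : ℝ), (1 : ℝ), (0 : ℝ)) v :=
    (hasDerivAt_const v _).prodMk ((hasDerivAt_const v _).prodMk
      ((hasDerivAt_id v).prodMk (hasDerivAt_const v _)))
  exact ((hf (u, s, v, t)).hasFDerivAt.comp_hasDerivAt v h).deriv

lemma pdt_eq (hf : Differentiable ℝ (unc f)) (u s v t : ℝ) :
    pdt f u s v t = fderiv ℝ (unc f) (u, s, v, t) (0, 0, 0, 1) := by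
  have h : HasDerivAt (fun z : ℝ => (u, s, v, z)) ((0 : ℝ), (0 : ℝ), (0 : ℝ), (1 : ℝ)) t :=
    (hasDerivAt_const t _).prodMk ((hasDerivAt_const t _).prodMk
      ((hasDerivAt_const t _).prodMk (hasDerivAt_id t)))
  exact ((hf (u, s, v, t)).hasFDerivAt.comp_hasDerivAt t h).deriv

/-- A directional derivative of a smooth function is differentiable, with the expected
second derivative. -/
lemma hasFDerivAt_dir (hf : ContDiff ℝ (⊤ : ℕ∞) (unc f)) (e p : ℝ × ℝ × ℝ × ℝ) :
    HasFDerivAt (fun q => fderiv ℝ (unc f) q e) ((fderiv ℝ (fderiv ℝ (unc f)) p).flip e) p := by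
  have h : DifferentiableAt ℝ (fderiv ℝ (unc f)) p :=
    (((contDiff_infty.mp hf 2).fderiv_right (m := 1) (by norm_num)).differentiable one_ne_zero) p
  have h' := h.hasFDerivAt.clm_apply (hasFDerivAt_const e p)
  simpa using h'

lemma smooth_differentiable (hf : ContDiff ℝ (⊤ : ℕ∞) (unc f)) : Differentiable ℝ (unc f) :=
  hf.differentiable (by simp)

lemma unc_pdu (hf : ContDiff ℝ (⊤ : ℕ∞) (unc f)) :
    unc (pdu f) = fun p => fderiv ℝ (unc f) p (1, 0, 0, 0) :=
  funext fun _ => pdu_eq (smooth_differentiable hf) _ _ _ _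

lemma unc_pds (hf : ContDiff ℝ (⊤ : ℕ∞) (unc f)) :
    unc (pds f) = fun p => fderiv ℝ (unc f) p (0, 1, 0, 0) :=
  funext fun _ => pds_eq (smooth_differentiable hf) _ _ _ _

lemma unc_pdv (hf : ContDiff ℝ (⊤ : ℕ∞) (unc f)) :
    unc (pdv f) = fun p => fderiv ℝ (unc f) p (0, 0, 1, 0) :=
  funext fun _ => pdv_eq (smooth_differentiable hf) _ _ _ _

lemma differentiable_pdu (hf : ContDiff ℝ (⊤ : ℕ∞) (unc f)) :
    Differentiable ℝ (unc (pdu f)) := by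
  rw [unc_pdu hf]
  exact fun p => (hasFDerivAt_dir hf _ p).differentiableAt

lemma differentiable_pds (hf : ContDiff ℝ (⊤ : ℕ∞) (unc f)) :
    Differentiable ℝ (unc (pds f)) := by
  rw [unc_pds hf]
  exact fun p => (hasFDerivAt_dir hf _ p).differentiableAt

lemma differentiable_pdv (hf : ContDiff ℝ (⊤ : ℕ∞) (unc f)) :
    Differentiable ℝ (unc (pdv f)) := by
  rw [unc_pdv hf]
  exact fun p => (hasFDerivAt_dir hf _ p).differentiableAt

lemma pds_pdv (hf : ContDiff ℝ (⊤ : ℕ∞) (unc f)) (u s v t : ℝ) :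
    pds (pdv f) u s v t = pdv (pds f) u s v t := by
  rw [pds_eq (differentiable_pdv hf), pdv_eq (differentiable_pds hf), unc_pdv hf, unc_pds hf,
    (hasFDerivAt_dir hf _ _).fderiv, (hasFDerivAt_dir hf _ _).fderiv]
  have hs : IsSymmSndFDerivAt ℝ (unc f) (u, s, v, t) :=
    (contDiff_infty.mp hf 2).contDiffAt.isSymmSndFDerivAt (by simp)
  exact hs _ _

/-- The chain rule in terms of the partial derivatives. -/
lemma hasFDerivAt_comp4 {E : Type*} [NormedAddCommGroup E] [NormedSpace ℝ E]
    (hf : Differentiable ℝ (unc f)) {U S V T : E → ℝ} {U' S' V' T' : E →L[ℝ] ℝ} {z : E}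
    (hU : HasFDerivAt U U' z) (hS : HasFDerivAt S S' z)
    (hV : HasFDerivAt V V' z) (hT : HasFDerivAt T T' z) :
    HasFDerivAt (fun w => f (U w) (S w) (V w) (T w))
      (pdu f (U z) (S z) (V z) (T z) • U' + pds f (U z) (S z) (V z) (T z) • S' +
        pdv f (U z) (S z) (V z) (T z) • V' + pdt f (U z) (S z) (V z) (T z) • T') z := by
  have h := (hf (U z, S z, V z, T z)).hasFDerivAt.comp z (hU.prodMk (hS.prodMk (hV.prodMk hT)))
  refine h.congr_fderiv ?_
  ext w
  rw [pdu_eq hf, pds_eq hf, pdv_eq hf, pdt_eq hf]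
  have hw : ((U' w, S' w, V' w, T' w) : ℝ × ℝ × ℝ × ℝ) =
      U' w • (1, 0, 0, 0) + S' w • (0, 1, 0, 0) + V' w • (0, 0, 1, 0) + T' w • (0, 0, 0, 1) := by
    simp
  have : fderiv ℝ (unc f) (U z, S z, V z, T z) (U' w, S' w, V' w, T' w) = _ :=
    congrArg (fderiv ℝ (unc f) (U z, S z, V z, T z)) hw
  simp only [map_add, map_smul, smul_eq_mul] at this
  simp only [ContinuousLinearMap.comp_apply, ContinuousLinearMap.prod_apply,
    add_apply, smul_apply, smul_eq_mul, this]
  ring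

end partials

/-! ### Derivatives of `r`, `u`, `s`, `v`, `t` -/

section scalars

variable {n : ℕ}

/-- The inner product `⟨x, ·⟩` as a continuous linear functional. -/
def ipL (x : Fin n → ℝ) : (Fin n → ℝ) →L[ℝ] ℝ :=
  ∑ i, x i • ContinuousLinearMap.proj (R := ℝ) (φ := fun _ : Fin n => ℝ) i

lemma ipL_apply (x z : Fin n → ℝ) : ipL x z = ip x z := by
  simp [ipL, ip]

lemma ipL_bvec (x : Fin n → ℝ) (l : Fin n) : ipL x (bvec n l) = x l := by
  simp [ipL, bvec, Pi.single_apply]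

lemma ip_comm (x z : Fin n → ℝ) : ip x z = ip z x := by
  simp [ip, mul_comm]

lemma hasFDerivAt_ip_right (x y : Fin n → ℝ) : HasFDerivAt (fun w => ip x w) (ipL x) y :=
  (ipL x).hasFDerivAt.congr_of_eventuallyEq (.of_forall fun w => (ipL_apply x w).symm)

lemma hasFDerivAt_ip_left (x y : Fin n → ℝ) : HasFDerivAt (fun w => ip w x) (ipL x) y := by
  simpa only [ip_comm] using hasFDerivAt_ip_right x y

lemma hasFDerivAt_uu (x : Fin n → ℝ) : HasFDerivAt uu ((2 : ℝ) • ipL x) x := by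
  have h : HasFDerivAt (fun w : Fin n → ℝ => ∑ i, w i * w i)
      (∑ i, (x i • ContinuousLinearMap.proj (R := ℝ) (φ := fun _ : Fin n => ℝ) i +
        x i • ContinuousLinearMap.proj (R := ℝ) (φ := fun _ : Fin n => ℝ) i)) x :=
    HasFDerivAt.fun_sum fun i _ => (hasFDerivAt_apply i x).mul (hasFDerivAt_apply i x)
  refine h.congr_fderiv ?_
  rw [Finset.sum_add_distrib, two_smul]
  rfl

lemma ip_self_pos {y : Fin n → ℝ} (hy : y ≠ 0) : 0 < ip y y := by
  obtain ⟨i, hi⟩ := Function.ne_iff.mp hy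
  exact Finset.sum_pos' (fun j _ => mul_self_nonneg _) ⟨i, Finset.mem_univ i, mul_self_pos.mpr hi⟩

lemma nrm_pos {y : Fin n → ℝ} (hy : y ≠ 0) : 0 < nrm y := Real.sqrt_pos.mpr (ip_self_pos hy)

lemma hasFDerivAt_nrm {y : Fin n → ℝ} (hy : y ≠ 0) :
    HasFDerivAt nrm ((nrm y)⁻¹ • ipL y) y := by
  refine ((hasFDerivAt_uu y).sqrt (ip_self_pos hy).ne').congr_fderiv ?_
  rw [smul_smul]
  congr 1
  change 1 / (2 * nrm y) * 2 = (nrm y)⁻¹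
  have := (nrm_pos hy).ne'
  field_simp

lemma hasFDerivAt_sc_left (x w : Fin n → ℝ) :
    HasFDerivAt (fun z => sc z w) ((nrm w)⁻¹ • ipL w) x := by
  simpa only [sc, div_eq_mul_inv] using (hasFDerivAt_ip_left w x).mul_const (nrm w)⁻¹

/-- Serves for both `s` and `t`, since `tc a = sc a` by definition. -/
lemma hasFDerivAt_sc_right (x : Fin n → ℝ) {y : Fin n → ℝ} (hy : y ≠ 0) :
    HasFDerivAt (fun w => sc x w) ((nrm y)⁻¹ • (ipL x - (sc x y / nrm y) • ipL y)) y := by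
  have hr := (nrm_pos hy).ne'
  have h := (hasFDerivAt_ip_right x y).mul ((hasDerivAt_inv hr).comp_hasFDerivAt y
    (hasFDerivAt_nrm hy))
  refine HasFDerivAt.congr_fderiv (f := fun w => sc x w) h ?_
  ext w
  simp only [add_apply, smul_apply,
    sub_apply, smul_eq_mul, sc, Function.comp_apply]
  field_simp
  ring

end scalars

/-! ### The first and mixed second derivatives of `F` -/

section metric

variable {n : ℕ} {φ : ℝ → ℝ → ℝ → ℝ → ℝ}

/-- `F_{x^k} = 2 r φ_u x_k + φ_s y_k + r φ_v a_k`. -/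
lemma fderiv_Fm_left (hφ : ContDiff ℝ (⊤ : ℕ∞) (unc φ)) (a x : Fin n → ℝ) {w : Fin n → ℝ}
    (hw : w ≠ 0) (k : Fin n) :
    fderiv ℝ (fun z => Fm φ a z w) x (bvec n k) =
      2 * x k * (nrm w * ev (pdu φ) a x w) + w k * ev (pds φ) a x w +
        a k * (nrm w * ev (pdv φ) a x w) := by
  have hr := (nrm_pos hw).ne'
  have h : HasFDerivAt (fun z => Fm φ a z w) _ x :=
    (hasFDerivAt_comp4 (smooth_differentiable hφ) (hasFDerivAt_uu x) (hasFDerivAt_sc_left x w)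
      (hasFDerivAt_ip_right a x) (hasFDerivAt_const (tc a w) x)).const_mul (nrm w)
  rw [h.fderiv]
  simp only [add_apply, smul_apply, smul_eq_mul,
    ipL_bvec, smul_zero, zero_apply]
  simp only [ev, vc]
  field_simp
  ring

lemma hasFDerivAt_ev {f : ℝ → ℝ → ℝ → ℝ → ℝ} (hf : Differentiable ℝ (unc f))
    (a x : Fin n → ℝ) {y : Fin n → ℝ} (hy : y ≠ 0) :
    HasFDerivAt (fun w => ev f a x w)
      (ev (pds f) a x y • (nrm y)⁻¹ • (ipL x - (sc x y / nrm y) • ipL y) +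
        ev (pdt f) a x y • (nrm y)⁻¹ • (ipL a - (tc a y / nrm y) • ipL y)) y := by
  have h := hasFDerivAt_comp4 hf (hasFDerivAt_const (uu x) y) (hasFDerivAt_sc_right x hy)
    (hasFDerivAt_const (vc a x) y) (hasFDerivAt_sc_right a hy)
  refine HasFDerivAt.congr_fderiv (f := fun w => ev f a x w) h ?_
  simp only [smul_zero, zero_add, add_zero]
  rfl

/-- `F_{x^k y^l}`, obtained by differentiating `fderiv_Fm_left` in `y^l`. -/
lemma fderiv_fderiv_Fm (hφ : ContDiff ℝ (⊤ : ℕ∞) (unc φ)) (a x : Fin n → ℝ) {y : Fin n → ℝ}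
    (hy : y ≠ 0) (k l : Fin n) :
    fderiv ℝ (fun w => fderiv ℝ (fun z => Fm φ a z w) x (bvec n k)) y (bvec n l) =
      x k * (2 * (y l / nrm y * ev (pdu φ) a x y + (ev (pds (pdu φ)) a x y * sv x y l +
        ev (pdt (pdu φ)) a x y * tv a y l))) +
      (y k * ((ev (pds (pds φ)) a x y * sv x y l + ev (pdt (pds φ)) a x y * tv a y l) / nrm y) +
        bvec n l k * ev (pds φ) a x y) +
      a k * (y l / nrm y * ev (pdv φ) a x y + (ev (pds (pdv φ)) a x y * sv x y l +
        ev (pdt (pdv φ)) a x y * tv a y l)) := by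
  have hr := (nrm_pos hy).ne'
  have hev : (fun w => fderiv ℝ (fun z => Fm φ a z w) x (bvec n k)) =ᶠ[nhds y]
      fun w => 2 * x k * (nrm w * ev (pdu φ) a x w) + w k * ev (pds φ) a x w +
        a k * (nrm w * ev (pdv φ) a x w) := by
    filter_upwards [isOpen_ne.mem_nhds hy] with w hw
    exact fderiv_Fm_left hφ a x hw k
  have hN := hasFDerivAt_nrm hy
  have h := (((hN.mul (hasFDerivAt_ev (differentiable_pdu hφ) a x hy)).const_mul (2 * x k)).add
    ((hasFDerivAt_apply k y).mul (hasFDerivAt_ev (differentiable_pds hφ) a x hy))).add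
    ((hN.mul (hasFDerivAt_ev (differentiable_pdv hφ) a x hy)).const_mul (a k))
  rw [hev.fderiv_eq]
  refine (congrArg (fun L : (Fin n → ℝ) →L[ℝ] ℝ => L (bvec n l)) h.fderiv).trans ?_
  simp only [add_apply, smul_apply,
    sub_apply, smul_eq_mul, ipL_bvec, ContinuousLinearMap.proj_apply, sv, tv]
  field_simp
  ring

end metric

end GSSFinsler

open GSSFinsler in
/-- `F_{x^ky^l}y^k − F_{x^l}` for a general spherically
symmetric metric. -/
theorem Fxy_contraction_formula_general_spherically_symmetric
    {n : ℕ} (φ : ℝ → ℝ → ℝ → ℝ → ℝ)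
    (hφ : ContDiff ℝ (⊤ : ℕ∞) (fun p : ℝ × ℝ × ℝ × ℝ => φ p.1 p.2.1 p.2.2.1 p.2.2.2))
    (a x y : Fin n → ℝ) (hy : y ≠ 0) :
    ∀ l : Fin n,
      (∑ k, fderiv ℝ (fun w => fderiv ℝ (fun z => Fm φ a z w) x (bvec n k)) y (bvec n l) * y k)
          - fderiv ℝ (fun z => Fm φ a z y) x (bvec n l) =
        nrm y * (2 * sc x y * ev (pds (pdu φ)) a x y + ev (pds (pds φ)) a x y +
            tc a y * ev (pdv (pds φ)) a x y - 2 * ev (pdu φ) a x y) *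
          (x l - sc x y * (y l / nrm y)) +
        nrm y * (2 * sc x y * ev (pdt (pdu φ)) a x y + ev (pdt (pds φ)) a x y +
            tc a y * ev (pdt (pdv φ)) a x y - ev (pdv φ) a x y) *
          (a l - tc a y * (y l / nrm y)) := by
  intro l
  have hr := (nrm_pos hy).ne'
  have hxy : ∑ k, x k * y k = sc x y * nrm y := (div_mul_cancel₀ (ip x y) hr).symm
  have hay : ∑ k, a k * y k = tc a y * nrm y := (div_mul_cancel₀ (ip a y) hr).symm
  have hyy : ∑ k, y k * y k = nrm y * nrm y := (Real.mul_self_sqrt (ip_self_pos hy).le).symm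
  have hl : ∑ k, bvec n l k * y k = y l := by simp [bvec, Pi.single_apply]
  have hsym : ev (pds (pdv φ)) a x y = ev (pdv (pds φ)) a x y := pds_pdv hφ _ _ _ _
  -- The contraction turns the four families of coefficients into `s r`, `r²`, `y_l` and `t r`.
  have hsum : ∀ A B C D : ℝ,
      ∑ k, (x k * A + (y k * B + bvec n l k * C) + a k * D) * y k =
        sc x y * nrm y * A + (nrm y * nrm y * B + y l * C) + tc a y * nrm y * D := by
    intro A B C D
    rw [← hxy, ← hay, ← hyy, ← hl]
    simp only [Finset.sum_mul, ← Finset.sum_add_distrib]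
    exact Finset.sum_congr rfl fun k _ => by ring
  simp only [fderiv_fderiv_Fm hφ a x hy, fderiv_Fm_left hφ a x hy, hsum, hsym, sv, tv]
  field_simp
  ring
end
end

section
/- Let F(x,y) = u·φ(r,s) be a spherically symmetric metric on a domain of ℝⁿ, n ≥ 3. At a point (x,y), y ≠ 0, where the fundamental tensor (g_{ij}) is positive definite, φ > 0, φ − sφ_s ≠ 0, φ − sφ_s + (r²−s²)φ_ss ≠ 0, ‖I‖² ≠ 0, and the denominator below is nonzero, the Cartan tensor satisfies C_{ijk} = (𝒫/(n+1))(h_{ij}I_k + h_{jk}I_i + h_{ki}I_j) + (𝒬/‖I‖²)I_iI_jI_k for all i,j,k, where 𝒫 := (n+1)[(φ−sφ_s)φ_s − sφφ_ss][φ−sφ_s+(r²−s²)φ_ss] / D, 𝒬 := (r²−s²)[(φ−sφ_s)φ_sss + 3sφ_ss²]φ / D, and D := (n+1)[(φ−sφ_s)φ_s − sφφ_ss][φ−sφ_s+(r²−s²)φ_ss] + (r²−s²)[(φ−sφ_s)φ_sss + 3sφ_ss²]φ. -/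
/-!
Write `u = |y|`, `l = y / u`, `s = ⟨x, l⟩`, `v = x - s l`, `a = 1 - l lᵀ`, `ρ = |v|² = r² - s²`,
`σ = φ - s φₛ` and `τ = σ + ρ φₛₛ`. Since `∂u = l`, `∂s = v / u`, `∂l = a / u` and
`∂v = -(l v + s a) / u`, direct differentiation gives

* `∂F = φ l + φₛ v`;
* `h = φ (σ a + φₛₛ v vᵀ)` and `g = h + ∂F ∂Fᵀ` (`gs_eq`, `angs_eq`);
* `2 u C = A (a ⊗ v, cyclically summed) + B v ⊗ v ⊗ v` with `A = σ φₛ - s φ φₛₛ` and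
  `B = φ φₛₛₛ + 3 φₛ φₛₛ` (`carts_eq`).

The inverse of `g` is never needed in full: `g (v - (φₛ ρ / φ) l) = φ τ v` and `g l = φ ∂F`
determine `g⁻¹ v` and `g⁻¹ ∂F`, and `tr (g⁻¹ g) = n` then determines `tr (g⁻¹ a)`
(`inverse_contractions`). Contracting `C` yields `I = D / (2 u φ σ τ) v` and
`‖I‖² = (D / (2 u φ σ τ))² ρ / (φ τ)` (`torsion_eq`); in particular `‖I‖² ≠ 0` forces `ρ ≠ 0`.
Substituting, the claim reduces to `3 A φₛₛ + φ (σ φₛₛₛ + 3 s φₛₛ²) = σ B`.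
-/


noncomputable section

open scoped BigOperators

namespace SSFinsler

/-- `k`-th standard basis vector of `ℝⁿ`. -/
def bvec (n : ℕ) (k : Fin n) : Fin n → ℝ := Pi.single k 1

/-- Standard inner product on `ℝⁿ`. -/
def ip {n : ℕ} (x y : Fin n → ℝ) : ℝ := ∑ i, x i * y i

/-- Euclidean norm on `ℝⁿ`. -/
def nrm {n : ℕ} (y : Fin n → ℝ) : ℝ := Real.sqrt (ip y y)

/-- Partial derivative in the second variable of a function of `(r,s)`. -/
def psd (f : ℝ → ℝ → ℝ) (r s : ℝ) : ℝ := deriv (fun z => f r z) s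

/-- The spherically symmetric metric `F(x,y) = |y| φ(|x|, ⟨x,y⟩/|y|)`. -/
def Fs {n : ℕ} (φ : ℝ → ℝ → ℝ) (x y : Fin n → ℝ) : ℝ :=
  nrm y * φ (nrm x) (ip x y / nrm y)

/-- Fundamental tensor `g_{ij} := ½ ∂²(F²)/∂y^i∂y^j`. -/
def gs {n : ℕ} (φ : ℝ → ℝ → ℝ) (x y : Fin n → ℝ) (i j : Fin n) : ℝ :=
  (1/2) * fderiv ℝ (fun z => fderiv ℝ (fun w => (Fs φ x w)^2) z (bvec n j)) y (bvec n i)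

/-- Cartan tensor `C_{ijk} := ½ ∂g_{ij}/∂y^k`. -/
def carts {n : ℕ} (φ : ℝ → ℝ → ℝ) (x y : Fin n → ℝ) (i j k : Fin n) : ℝ :=
  (1/2) * fderiv ℝ (fun z => gs φ x z i j) y (bvec n k)

/-- Angular metric `h_{ij} := g_{ij} − F_{y^i}F_{y^j}`. -/
def angs {n : ℕ} (φ : ℝ → ℝ → ℝ) (x y : Fin n → ℝ) (i j : Fin n) : ℝ :=
  gs φ x y i j -
    fderiv ℝ (fun w => Fs φ x w) y (bvec n i) * fderiv ℝ (fun w => Fs φ x w) y (bvec n j)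

/-- The fundamental tensor as a matrix. -/
def gsMat {n : ℕ} (φ : ℝ → ℝ → ℝ) (x y : Fin n → ℝ) : Matrix (Fin n) (Fin n) ℝ :=
  Matrix.of fun i j => gs φ x y i j

/-- The inverse fundamental tensor `g^{ij}`. -/
def gsInv {n : ℕ} (φ : ℝ → ℝ → ℝ) (x y : Fin n → ℝ) : Matrix (Fin n) (Fin n) ℝ :=
  (gsMat φ x y)⁻¹

/-- Mean Cartan torsion `I_k := g^{jl} C_{jlk}`. -/
def mcis {n : ℕ} (φ : ℝ → ℝ → ℝ) (x y : Fin n → ℝ) (k : Fin n) : ℝ :=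
  ∑ j, ∑ l, gsInv φ x y j l * carts φ x y j l k

/-- Squared norm `‖I‖² := g^{ij} I_i I_j` of the mean Cartan torsion. -/
def normI2s {n : ℕ} (φ : ℝ → ℝ → ℝ) (x y : Fin n → ℝ) : ℝ :=
  ∑ i, ∑ j, gsInv φ x y i j * mcis φ x y i * mcis φ x y j

end SSFinsler

namespace SSFinsler

/-- `f` is differentiable at `y` and its `k`-th partial derivative there is `c`. -/
def HasPartial {n : ℕ} (k : Fin n) (f : (Fin n → ℝ) → ℝ) (y : Fin n → ℝ) (c : ℝ) : Prop :=
  DifferentiableAt ℝ f y ∧ fderiv ℝ f y (bvec n k) = c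

/-! ### Calculus of partial derivatives -/

section Calculus

variable {n : ℕ} {k : Fin n} {f g : (Fin n → ℝ) → ℝ} {y : Fin n → ℝ} {a b : ℝ}

lemma HasPartial.const (c : ℝ) : HasPartial k (fun _ => c) y 0 :=
  ⟨differentiableAt_const c, by simp⟩

lemma HasPartial.congr_val (hf : HasPartial k f y a) (h : a = b) : HasPartial k f y b := h ▸ hf

lemma HasPartial.add (hf : HasPartial k f y a) (hg : HasPartial k g y b) :
    HasPartial k (fun z => f z + g z) y (a + b) :=
  ⟨hf.1.add hg.1, by rw [fderiv_fun_add hf.1 hg.1, ← hf.2, ← hg.2]; rfl⟩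

lemma HasPartial.sub (hf : HasPartial k f y a) (hg : HasPartial k g y b) :
    HasPartial k (fun z => f z - g z) y (a - b) :=
  ⟨hf.1.sub hg.1, by rw [fderiv_fun_sub hf.1 hg.1, ← hf.2, ← hg.2]; rfl⟩

lemma HasPartial.mul (hf : HasPartial k f y a) (hg : HasPartial k g y b) :
    HasPartial k (fun z => f z * g z) y (a * g y + f y * b) :=
  ⟨hf.1.mul hg.1, by rw [fderiv_fun_mul hf.1 hg.1, ← hf.2, ← hg.2]; simp; ring⟩

lemma HasPartial.comp {q : ℝ → ℝ} {q' : ℝ} (hq : HasDerivAt q q' (f y))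
    (hf : HasPartial k f y a) : HasPartial k (fun z => q (f z)) y (q' * a) := by
  have h := hq.comp_hasFDerivAt y hf.1.hasFDerivAt
  refine ⟨h.differentiableAt, ?_⟩
  have h2 : fderiv ℝ (fun z => q (f z)) y = q' • fderiv ℝ f y := h.fderiv
  rw [h2, ← hf.2]; rfl

lemma HasPartial.coord (j : Fin n) :
    HasPartial k (fun z => z j) y (if j = k then 1 else 0) := by
  have h : HasFDerivAt (fun z : Fin n → ℝ => z j)
      (ContinuousLinearMap.proj (R := ℝ) (φ := fun _ : Fin n => ℝ) j) y :=
    (ContinuousLinearMap.proj (R := ℝ) (φ := fun _ : Fin n => ℝ) j).hasFDerivAt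
  refine ⟨h.differentiableAt, ?_⟩
  rw [h.fderiv]
  simp [bvec, Pi.single_apply]

lemma HasPartial.sum {ι : Type*} (t : Finset ι) {f : ι → (Fin n → ℝ) → ℝ} {a : ι → ℝ}
    (hf : ∀ i, HasPartial k (f i) y (a i)) :
    HasPartial k (fun z => ∑ i ∈ t, f i z) y (∑ i ∈ t, a i) := by
  classical
  induction t using Finset.induction_on with
  | empty => simpa using HasPartial.const 0
  | insert i t hi ih => simpa [Finset.sum_insert hi] using (hf i).add ih

lemma HasPartial.congr_of_ne (hy : y ≠ 0) (hf : HasPartial k f y a)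
    (h : ∀ z, z ≠ 0 → g z = f z) : HasPartial k g y a := by
  have he : g =ᶠ[nhds y] f := by
    filter_upwards [isOpen_ne.mem_nhds hy] with z hz using h z hz
  exact ⟨hf.1.congr_of_eventuallyEq he, by rw [he.fderiv_eq]; exact hf.2⟩

end Calculus

/-! ### The adapted frame `l`, `v`, `a` and its derivatives -/

section Frame

variable {n : ℕ} {k : Fin n} {x y : Fin n → ℝ}

/-- The variable `s = ⟨x, y⟩ / |y|`. -/
def sv (x y : Fin n → ℝ) : ℝ := ip x y / nrm y

/-- The unit vector `y / |y|`. -/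
def lv (y : Fin n → ℝ) (j : Fin n) : ℝ := y j / nrm y

/-- The component `v = x - s l` of `x` orthogonal to the unit vector `l = y / |y|`. -/
def vv (x y : Fin n → ℝ) (j : Fin n) : ℝ := x j - sv x y * lv y j

/-- The orthogonal projection `δᵢⱼ - lᵢ lⱼ` onto the complement of `y`. -/
def av (y : Fin n → ℝ) (i j : Fin n) : ℝ := (if i = j then 1 else 0) - lv y i * lv y j

lemma ip_self_pos (hy : y ≠ 0) : 0 < ip y y := by
  obtain ⟨i, hi⟩ := Function.ne_iff.mp hy
  exact Finset.sum_pos' (fun j _ => mul_self_nonneg _)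
    ⟨i, Finset.mem_univ _, mul_self_pos.mpr hi⟩

lemma nrm_pos (hy : y ≠ 0) : 0 < nrm y := Real.sqrt_pos.mpr (ip_self_pos hy)

lemma nrm_sq (y : Fin n → ℝ) : nrm y ^ 2 = ip y y :=
  Real.sq_sqrt (Finset.sum_nonneg fun _ _ => mul_self_nonneg _)

lemma sum_lv_lv (hy : y ≠ 0) : ∑ i, lv y i * lv y i = 1 := by
  have h := nrm_pos hy
  have : ∑ i, lv y i * lv y i = ip y y / nrm y ^ 2 := by
    rw [ip, Finset.sum_div]
    exact Finset.sum_congr rfl fun i _ => by rw [lv]; field_simp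
  rw [this, nrm_sq, div_self (ip_self_pos hy).ne']

lemma sum_x_lv : ∑ i, x i * lv y i = sv x y := by
  rw [sv, ip, Finset.sum_div]
  exact Finset.sum_congr rfl fun i _ => by rw [lv]; ring

lemma sum_lv_vv (hy : y ≠ 0) : ∑ i, lv y i * vv x y i = 0 := by
  have : ∑ i, lv y i * vv x y i
      = ∑ i, x i * lv y i - sv x y * ∑ i, lv y i * lv y i := by
    rw [Finset.mul_sum, ← Finset.sum_sub_distrib]
    exact Finset.sum_congr rfl fun i _ => by rw [vv]; ring
  rw [this, sum_x_lv, sum_lv_lv hy]; ring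

lemma sum_vv_vv (hy : y ≠ 0) : ∑ i, vv x y i * vv x y i = nrm x ^ 2 - sv x y ^ 2 := by
  have : ∑ i, vv x y i * vv x y i
      = ip x x - 2 * sv x y * ∑ i, x i * lv y i + sv x y ^ 2 * ∑ i, lv y i * lv y i := by
    rw [ip, Finset.mul_sum, Finset.mul_sum, ← Finset.sum_sub_distrib, ← Finset.sum_add_distrib]
    exact Finset.sum_congr rfl fun i _ => by rw [vv]; ring
  rw [this, sum_x_lv, sum_lv_lv hy, nrm_sq]; ring

lemma hasPartial_ip : HasPartial k (fun z => ip x z) y (x k) := by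
  refine (HasPartial.sum Finset.univ fun i =>
    (HasPartial.const (x i)).mul (HasPartial.coord i)).congr_val ?_
  simp

lemma hasPartial_nrm (hy : y ≠ 0) : HasPartial k (fun z => nrm z) y (lv y k) := by
  have h1 : HasPartial k (fun z => ip z z) y (2 * y k) := by
    refine (HasPartial.sum Finset.univ fun i =>
      (HasPartial.coord i).mul (HasPartial.coord i)).congr_val ?_
    simp [Finset.sum_add_distrib]; ring
  refine (HasPartial.comp (f := fun z => ip z z)
    (Real.hasDerivAt_sqrt (ip_self_pos hy).ne') h1).congr_val ?_
  have := nrm_pos hy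
  rw [lv, ← nrm]
  field_simp

lemma hasPartial_inv_nrm (hy : y ≠ 0) :
    HasPartial k (fun z => (nrm z)⁻¹) y (-lv y k / nrm y ^ 2) :=
  (HasPartial.comp (hasDerivAt_inv (nrm_pos hy).ne') (hasPartial_nrm hy)).congr_val (by ring)

lemma hasPartial_sv (hy : y ≠ 0) : HasPartial k (fun z => sv x z) y (vv x y k / nrm y) := by
  refine (hasPartial_ip.mul (hasPartial_inv_nrm hy)).congr_val ?_
  have := nrm_pos hy
  rw [vv, sv]
  field_simp
  ring

lemma hasPartial_lv (hy : y ≠ 0) (j : Fin n) :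
    HasPartial k (fun z => lv z j) y (av y j k / nrm y) := by
  refine ((HasPartial.coord j).mul (hasPartial_inv_nrm hy)).congr_val ?_
  have := nrm_pos hy
  simp only [av, lv]
  field_simp
  ring

lemma hasPartial_vv (hy : y ≠ 0) (j : Fin n) :
    HasPartial k (fun z => vv x z j) y
      ((-(vv x y k * lv y j) - sv x y * av y j k) / nrm y) :=
  ((HasPartial.const (x j)).sub
    ((hasPartial_sv hy).mul (hasPartial_lv hy j))).congr_val (by ring)

lemma hasPartial_av (hy : y ≠ 0) (i j : Fin n) :
    HasPartial k (fun z => av z i j) y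
      (-(av y i k * lv y j + lv y i * av y j k) / nrm y) :=
  ((HasPartial.const _).sub
    ((hasPartial_lv hy i).mul (hasPartial_lv hy j))).congr_val (by ring)

lemma av_symm (i j : Fin n) : av y i j = av y j i := by
  simp only [av, eq_comm, mul_comm]

end Frame

/-! ### Fundamental, angular and Cartan tensors -/

section Tensors

variable {n : ℕ} {x y : Fin n → ℝ} {φ : ℝ → ℝ → ℝ}

/-- The components `∂F/∂yⁱ = φ lᵢ + φₛ vᵢ` of the differential of `F`. -/
def Fv (φ : ℝ → ℝ → ℝ) (x y : Fin n → ℝ) (i : Fin n) : ℝ :=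
  φ (nrm x) (sv x y) * lv y i + psd φ (nrm x) (sv x y) * vv x y i

lemma contDiff_slice (hφ : ContDiff ℝ (⊤ : ℕ∞) (fun p : ℝ × ℝ => φ p.1 p.2)) (r : ℝ) :
    ContDiff ℝ (⊤ : ℕ∞) (fun s => φ r s) :=
  hφ.comp (contDiff_const.prodMk contDiff_id)

lemma hasDerivAt_psd_iter (hφ : ContDiff ℝ (⊤ : ℕ∞) (fun p : ℝ × ℝ => φ p.1 p.2)) (r s : ℝ) :
    HasDerivAt (fun s => φ r s) (psd φ r s) s ∧
    HasDerivAt (fun s => psd φ r s) (psd (psd φ) r s) s ∧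
    HasDerivAt (fun s => psd (psd φ) r s) (psd (psd (psd φ)) r s) s := by
  have h0 := contDiff_slice hφ r
  have h1 : ContDiff ℝ (⊤ : ℕ∞) (fun s => psd φ r s) := (contDiff_infty_iff_deriv.mp h0).2
  have h2 : ContDiff ℝ (⊤ : ℕ∞) (fun s => psd (psd φ) r s) := (contDiff_infty_iff_deriv.mp h1).2
  exact ⟨(h0.differentiable (by simp) s).hasDerivAt, (h1.differentiable (by simp) s).hasDerivAt,
    (h2.differentiable (by simp) s).hasDerivAt⟩

lemma hasPartial_phi (hφ : ContDiff ℝ (⊤ : ℕ∞) (fun p : ℝ × ℝ => φ p.1 p.2))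
    (hy : y ≠ 0) (k : Fin n) :
    HasPartial k (fun z => φ (nrm x) (sv x z)) y
        (psd φ (nrm x) (sv x y) * (vv x y k / nrm y)) ∧
    HasPartial k (fun z => psd φ (nrm x) (sv x z)) y
        (psd (psd φ) (nrm x) (sv x y) * (vv x y k / nrm y)) ∧
    HasPartial k (fun z => psd (psd φ) (nrm x) (sv x z)) y
        (psd (psd (psd φ)) (nrm x) (sv x y) * (vv x y k / nrm y)) := by
  obtain ⟨h0, h1, h2⟩ := hasDerivAt_psd_iter hφ (nrm x) (sv x y)
  exact ⟨HasPartial.comp h0 (hasPartial_sv hy), HasPartial.comp h1 (hasPartial_sv hy),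
    HasPartial.comp h2 (hasPartial_sv hy)⟩

lemma hasPartial_Fs (hφ : ContDiff ℝ (⊤ : ℕ∞) (fun p : ℝ × ℝ => φ p.1 p.2))
    (hy : y ≠ 0) (k : Fin n) :
    HasPartial k (fun z => Fs φ x z) y (Fv φ x y k) := by
  refine ((hasPartial_nrm hy).mul (hasPartial_phi hφ hy k).1).congr_val ?_
  have := nrm_pos hy
  rw [Fv]
  field_simp

lemma hasPartial_Fv (hφ : ContDiff ℝ (⊤ : ℕ∞) (fun p : ℝ × ℝ => φ p.1 p.2))
    (hy : y ≠ 0) (j k : Fin n) :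
    HasPartial k (fun z => Fv φ x z j) y
      (((φ (nrm x) (sv x y) - sv x y * psd φ (nrm x) (sv x y)) * av y j k
        + psd (psd φ) (nrm x) (sv x y) * vv x y j * vv x y k) / nrm y) := by
  obtain ⟨h0, h1, -⟩ := hasPartial_phi (x := x) hφ hy k
  exact ((h0.mul (hasPartial_lv hy j)).add (h1.mul (hasPartial_vv hy j))).congr_val (by ring)

lemma gs_eq (hφ : ContDiff ℝ (⊤ : ℕ∞) (fun p : ℝ × ℝ => φ p.1 p.2))
    (hy : y ≠ 0) (i j : Fin n) :
    gs φ x y i j = φ (nrm x) (sv x y) *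
        ((φ (nrm x) (sv x y) - sv x y * psd φ (nrm x) (sv x y)) * av y i j
          + psd (psd φ) (nrm x) (sv x y) * vv x y i * vv x y j)
      + Fv φ x y i * Fv φ x y j := by
  have h1 : ∀ z : Fin n → ℝ, z ≠ 0 →
      fderiv ℝ (fun w => (Fs φ x w) ^ 2) z (bvec n j) = 2 * (Fs φ x z * Fv φ x z j) := by
    intro z hz
    have h := (hasPartial_Fs (x := x) hφ hz j).mul (hasPartial_Fs (x := x) hφ hz j)
    simp only [pow_two]
    rw [h.2]; ring
  have h2 := ((HasPartial.const 2).mul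
    ((hasPartial_Fs (x := x) hφ hy i).mul (hasPartial_Fv hφ hy j i))).congr_of_ne hy h1
  have := nrm_pos hy
  rw [gs, h2.2, av_symm j i, Fs, ← sv]
  field_simp
  ring

lemma angs_eq (hφ : ContDiff ℝ (⊤ : ℕ∞) (fun p : ℝ × ℝ => φ p.1 p.2))
    (hy : y ≠ 0) (i j : Fin n) :
    angs φ x y i j = φ (nrm x) (sv x y) *
        ((φ (nrm x) (sv x y) - sv x y * psd φ (nrm x) (sv x y)) * av y i j
          + psd (psd φ) (nrm x) (sv x y) * vv x y i * vv x y j) := by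
  rw [angs, gs_eq hφ hy, (hasPartial_Fs hφ hy i).2, (hasPartial_Fs hφ hy j).2]
  ring

lemma carts_eq (hφ : ContDiff ℝ (⊤ : ℕ∞) (fun p : ℝ × ℝ => φ p.1 p.2))
    (hy : y ≠ 0) (i j k : Fin n) :
    carts φ x y i j k = 1 / (2 * nrm y) *
      (((φ (nrm x) (sv x y) - sv x y * psd φ (nrm x) (sv x y)) * psd φ (nrm x) (sv x y)
          - sv x y * φ (nrm x) (sv x y) * psd (psd φ) (nrm x) (sv x y)) *
          (av y i j * vv x y k + av y j k * vv x y i + av y i k * vv x y j)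
        + (φ (nrm x) (sv x y) * psd (psd (psd φ)) (nrm x) (sv x y)
          + 3 * psd φ (nrm x) (sv x y) * psd (psd φ) (nrm x) (sv x y)) *
          (vv x y i * vv x y j * vv x y k)) := by
  obtain ⟨h0, h1, h2⟩ := hasPartial_phi (x := x) hφ hy k
  have hg := ((h0.mul (((h0.sub ((hasPartial_sv hy).mul h1)).mul (hasPartial_av hy i j)).add
    ((h2.mul (hasPartial_vv hy i)).mul (hasPartial_vv hy j)))).add
    ((hasPartial_Fv hφ hy i k).mul (hasPartial_Fv hφ hy j k))).congr_of_ne hy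
      (fun z hz => gs_eq hφ hz i j)
  have := nrm_pos hy
  rw [carts, hg.2]
  simp only [Fv]
  field_simp
  ring

end Tensors

/-! ### Contractions with the inverse fundamental tensor -/

section LinearAlgebra

open Matrix

/-- Contractions with the inverse of
`M = p σ (1 - l lᵀ) + p q v vᵀ + w wᵀ`, `w = p l + p' v`, where `l` is a unit vector orthogonal
to `v` and `ρ = |v|²`. -/
lemma inverse_contractions {n : ℕ} (M : Matrix (Fin n) (Fin n) ℝ) (hM : IsUnit M.det)
    (l v : Fin n → ℝ) (p p' q σ ρ : ℝ) (hp : p ≠ 0) (hσ : σ ≠ 0) (hτ : σ + ρ * q ≠ 0)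
    (hll : ∑ i, l i * l i = 1) (hlv : ∑ i, l i * v i = 0) (hvv : ∑ i, v i * v i = ρ)
    (hMe : ∀ i j, M i j = p * (σ * ((if i = j then 1 else 0) - l i * l j) + q * v i * v j)
      + (p * l i + p' * v i) * (p * l j + p' * v j)) :
    (∀ i, ∑ j, M⁻¹ i j * v j = (v i - p' * ρ / p * l i) / (p * (σ + ρ * q))) ∧
    (∀ j, ∑ i, M⁻¹ i j * v i = (v j - p' * ρ / p * l j) / (p * (σ + ρ * q))) ∧
    (∑ i, ∑ j, M⁻¹ i j * ((if i = j then 1 else 0) - l i * l j)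
      = (((n : ℝ) - 1) - ρ * q / (σ + ρ * q)) / (p * σ)) := by
  have hsym : M⁻¹ᵀ = M⁻¹ := by
    rw [transpose_nonsing_inv]
    congr 1
    ext i j
    rw [transpose_apply, hMe, hMe]
    simp only [eq_comm (a := j)]
    ring
  -- if `M a = b` then `M⁻¹ b = a`
  have key : ∀ a b : Fin n → ℝ, (∀ i, ∑ j, M i j * a j = b i) →
      ∀ i, ∑ j, M⁻¹ i j * b j = a i := by
    intro a b h i
    have hb : M *ᵥ a = b := funext h
    have : M⁻¹ *ᵥ b = a := by
      rw [← hb, mulVec_mulVec, nonsing_inv_mul _ hM, one_mulVec]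
    exact congrFun this i
  have app : ∀ (a : Fin n → ℝ) (i : Fin n), ∑ j, M i j * a j
      = p * (σ * (a i - l i * ∑ j, l j * a j) + q * v i * ∑ j, v j * a j)
        + (p * l i + p' * v i) * (p * ∑ j, l j * a j + p' * ∑ j, v j * a j) := by
    intro a i
    have hd : a i = ∑ j, (if i = j then 1 else 0) * a j := by simp
    conv_rhs => enter [1, 2, 1, 2, 1]; rw [hd]
    simp only [Finset.mul_sum, ← Finset.sum_sub_distrib, ← Finset.sum_add_distrib]
    exact Finset.sum_congr rfl fun j _ => by rw [hMe]; ring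
  have hvl : ∑ i, v i * l i = 0 := by simpa only [mul_comm] using hlv
  have N1 : ∀ i, ∑ j, M⁻¹ i j * v j = (v i - p' * ρ / p * l i) / (p * (σ + ρ * q)) := by
    refine key _ _ fun i => ?_
    have e1 : ∑ j, l j * ((v j - p' * ρ / p * l j) / (p * (σ + ρ * q)))
        = (∑ j, l j * v j - p' * ρ / p * ∑ j, l j * l j) / (p * (σ + ρ * q)) := by
      rw [Finset.mul_sum, ← Finset.sum_sub_distrib, Finset.sum_div]
      exact Finset.sum_congr rfl fun j _ => by ring
    have e2 : ∑ j, v j * ((v j - p' * ρ / p * l j) / (p * (σ + ρ * q)))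
        = (∑ j, v j * v j - p' * ρ / p * ∑ j, v j * l j) / (p * (σ + ρ * q)) := by
      rw [Finset.mul_sum, ← Finset.sum_sub_distrib, Finset.sum_div]
      exact Finset.sum_congr rfl fun j _ => by ring
    rw [app, e1, e2, hll, hlv, hvv, hvl]
    field_simp
    ring
  have N2 : ∀ i, ∑ j, M⁻¹ i j * (p * l j + p' * v j) = l i / p := by
    refine key _ _ fun i => ?_
    have e1 : ∑ j, l j * (l j / p) = 1 / p := by
      rw [← hll, Finset.sum_div]; exact Finset.sum_congr rfl fun j _ => by ring
    have e2 : ∑ j, v j * (l j / p) = 0 := by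
      rw [← zero_div p, ← hvl, Finset.sum_div]; exact Finset.sum_congr rfl fun j _ => by ring
    rw [app, e1, e2]
    field_simp
    ring
  refine ⟨N1, fun j => ?_, ?_⟩
  · rw [← N1 j]
    refine Finset.sum_congr rfl fun i _ => ?_
    rw [← transpose_apply M⁻¹ i j, hsym]
  · have tr : ∑ i, ∑ j, M⁻¹ i j * M i j = n := by
      have h : (M⁻¹ * M).trace = n := by rw [nonsing_inv_mul _ hM]; simp
      rw [← h]
      simp only [trace, diag_apply, mul_apply]
      refine Finset.sum_congr rfl fun i _ => Finset.sum_congr rfl fun j _ => ?_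
      rw [hMe, hMe]
      simp only [eq_comm (a := j)]
      ring
    have s1 : ∑ i, ∑ j, M⁻¹ i j * (v i * v j) = ρ / (p * (σ + ρ * q)) := by
      have : ∑ i, ∑ j, M⁻¹ i j * (v i * v j) = ∑ i, v i * ∑ j, M⁻¹ i j * v j := by
        simp only [Finset.mul_sum]
        exact Finset.sum_congr rfl fun i _ => Finset.sum_congr rfl fun j _ => by ring
      rw [this]
      have e2 : ∑ j, v j * ((v j - p' * ρ / p * l j) / (p * (σ + ρ * q)))
          = (∑ j, v j * v j - p' * ρ / p * ∑ j, v j * l j) / (p * (σ + ρ * q)) := by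
        rw [Finset.mul_sum, ← Finset.sum_sub_distrib, Finset.sum_div]
        exact Finset.sum_congr rfl fun j _ => by ring
      simp only [N1]
      rw [e2, hvv, hvl]; ring
    have s2 : ∑ i, ∑ j, M⁻¹ i j * ((p * l i + p' * v i) * (p * l j + p' * v j)) = 1 := by
      have : ∑ i, ∑ j, M⁻¹ i j * ((p * l i + p' * v i) * (p * l j + p' * v j))
          = ∑ i, (p * l i + p' * v i) * ∑ j, M⁻¹ i j * (p * l j + p' * v j) := by
        simp only [Finset.mul_sum]
        exact Finset.sum_congr rfl fun i _ => Finset.sum_congr rfl fun j _ => by ring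
      rw [this]
      simp only [N2]
      have : ∑ i, (p * l i + p' * v i) * (l i / p)
          = (p * ∑ i, l i * l i + p' * ∑ i, v i * l i) / p := by
        rw [Finset.mul_sum, Finset.mul_sum, ← Finset.sum_add_distrib, Finset.sum_div]
        exact Finset.sum_congr rfl fun i _ => by ring
      rw [this, hll, hvl]
      field_simp
      ring
    have dec : ∑ i, ∑ j, M⁻¹ i j * M i j
        = p * σ * (∑ i, ∑ j, M⁻¹ i j * ((if i = j then 1 else 0) - l i * l j))
          + p * q * (∑ i, ∑ j, M⁻¹ i j * (v i * v j))
          + ∑ i, ∑ j, M⁻¹ i j * ((p * l i + p' * v i) * (p * l j + p' * v j)) := by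
      simp only [Finset.mul_sum, ← Finset.sum_add_distrib]
      exact Finset.sum_congr rfl fun i _ => Finset.sum_congr rfl fun j _ => by
        rw [hMe]; ring
    rw [tr, s1, s2] at dec
    rw [eq_div_iff (mul_ne_zero hp hσ)]
    have e3 : p * q * (ρ / (p * (σ + ρ * q))) = ρ * q / (σ + ρ * q) := by field_simp
    rw [e3] at dec
    linarith

end LinearAlgebra

/-! ### The mean Cartan torsion -/

section Torsion

variable {n : ℕ} {x y : Fin n → ℝ} {φ : ℝ → ℝ → ℝ}

/-- The mean Cartan torsion is the multiple `D / (2 u φ σ τ)` of `v`, with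
`σ = φ - s φₛ` and `τ = σ + (r² - s²) φₛₛ`, and its squared norm follows. -/
lemma torsion_eq (hφ : ContDiff ℝ (⊤ : ℕ∞) (fun p : ℝ × ℝ => φ p.1 p.2)) (hy : y ≠ 0)
    (hM : IsUnit (gsMat φ x y).det) (s p p' q t σ ρ τ D : ℝ)
    (hs : sv x y = s) (hp : φ (nrm x) s = p) (hp' : psd φ (nrm x) s = p')
    (hq : psd (psd φ) (nrm x) s = q) (ht : psd (psd (psd φ)) (nrm x) s = t)
    (hσ : p - s * p' = σ) (hρ : nrm x ^ 2 - s ^ 2 = ρ) (hτ : σ + ρ * q = τ)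
    (hD : ((n : ℝ) + 1) * (σ * p' - s * p * q) * τ + ρ * (σ * t + 3 * s * q ^ 2) * p = D)
    (hp0 : p ≠ 0) (hσ0 : σ ≠ 0) (hτ0 : τ ≠ 0) :
    (∀ k, mcis φ x y k = D / (2 * nrm y * p * σ * τ) * vv x y k) ∧
    normI2s φ x y = (D / (2 * nrm y * p * σ * τ)) ^ 2 * (ρ / (p * τ)) := by
  have hu := nrm_pos hy
  obtain ⟨N1, N1', N3⟩ := inverse_contractions (gsMat φ x y) hM (lv y) (vv x y) p p' q σ ρ hp0 hσ0
    (hτ ▸ hτ0) (sum_lv_lv hy) (sum_lv_vv hy) (by rw [sum_vv_vv hy, hs, hρ])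
    (by
      intro i j
      have := gs_eq (x := x) hφ hy i j
      rw [Fv, Fv, hs, hp, hp', hq, hσ] at this
      exact this)
  rw [hτ] at N1 N1' N3
  rw [← gsInv] at N1 N1' N3
  have hvv : ∑ i, vv x y i * vv x y i = ρ := by rw [sum_vv_vv hy, hs, hρ]
  have hvl : ∑ i, vv x y i * lv y i = 0 := by
    simpa only [mul_comm] using sum_lv_vv (x := x) hy
  have s1 : ∑ i, ∑ j, gsInv φ x y i j * (vv x y i * vv x y j) = ρ / (p * τ) := by
    have : ∑ i, ∑ j, gsInv φ x y i j * (vv x y i * vv x y j)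
        = ∑ i, vv x y i * ∑ j, gsInv φ x y i j * vv x y j := by
      simp only [Finset.mul_sum]
      exact Finset.sum_congr rfl fun i _ => Finset.sum_congr rfl fun j _ => by ring
    rw [this]
    simp only [N1]
    have e2 : ∑ j, vv x y j * ((vv x y j - p' * ρ / p * lv y j) / (p * τ))
        = (∑ j, vv x y j * vv x y j - p' * ρ / p * ∑ j, vv x y j * lv y j) / (p * τ) := by
      rw [Finset.mul_sum, ← Finset.sum_sub_distrib, Finset.sum_div]
      exact Finset.sum_congr rfl fun j _ => by ring
    rw [e2, hvv, hvl]; ring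
  -- `a` fixes `v` and kills `l`
  have s3 : ∀ k, ∑ i, av y i k * ((vv x y i - p' * ρ / p * lv y i) / (p * τ))
      = vv x y k / (p * τ) := by
    intro k
    have hd : ∀ a : Fin n → ℝ, ∑ i, av y i k * a i = a k - lv y k * ∑ i, lv y i * a i := by
      intro a
      simp only [av, sub_mul, Finset.sum_sub_distrib, Finset.mul_sum]
      congr 1
      · simp
      · exact Finset.sum_congr rfl fun i _ => by ring
    rw [hd]
    have e1 : ∑ j, lv y j * ((vv x y j - p' * ρ / p * lv y j) / (p * τ))
        = (∑ j, lv y j * vv x y j - p' * ρ / p * ∑ j, lv y j * lv y j) / (p * τ) := by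
      rw [Finset.mul_sum, ← Finset.sum_sub_distrib, Finset.sum_div]
      exact Finset.sum_congr rfl fun j _ => by ring
    rw [e1, sum_lv_vv hy, sum_lv_lv hy]; ring
  have s4 : ∀ k, ∑ i, ∑ j, gsInv φ x y i j * (av y j k * vv x y i) = vv x y k / (p * τ) := by
    intro k
    rw [← s3 k, Finset.sum_comm]
    refine Finset.sum_congr rfl fun j _ => ?_
    rw [← N1' j, Finset.mul_sum]
    exact Finset.sum_congr rfl fun i _ => by ring
  have s5 : ∀ k, ∑ i, ∑ j, gsInv φ x y i j * (av y i k * vv x y j) = vv x y k / (p * τ) := by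
    intro k
    rw [← s3 k]
    refine Finset.sum_congr rfl fun i _ => ?_
    rw [← N1 i, Finset.mul_sum]
    exact Finset.sum_congr rfl fun j _ => by ring
  have N3' : ∑ i, ∑ j, gsInv φ x y i j * av y i j = ((n : ℝ) - 1 - ρ * q / τ) / (p * σ) := N3
  have hI : ∀ k, mcis φ x y k = D / (2 * nrm y * p * σ * τ) * vv x y k := by
    intro k
    have : mcis φ x y k = 1 / (2 * nrm y) * ((σ * p' - s * p * q) *
          ((∑ i, ∑ j, gsInv φ x y i j * av y i j) * vv x y k
            + (∑ i, ∑ j, gsInv φ x y i j * (av y j k * vv x y i))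
            + ∑ i, ∑ j, gsInv φ x y i j * (av y i k * vv x y j))
        + (p * t + 3 * p' * q) *
          ((∑ i, ∑ j, gsInv φ x y i j * (vv x y i * vv x y j)) * vv x y k)) := by
      rw [mcis]
      simp only [Finset.mul_sum, Finset.sum_mul, ← Finset.sum_add_distrib]
      refine Finset.sum_congr rfl fun i _ => Finset.sum_congr rfl fun j _ => ?_
      rw [carts_eq hφ hy, hs, hp, hp', hq, ht, hσ]
      ring
    rw [this, N3', s4, s5, s1, ← hD]
    field_simp
    rw [← hτ, ← hσ]
    ring
  refine ⟨hI, ?_⟩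
  rw [normI2s, ← s1, Finset.mul_sum]
  refine Finset.sum_congr rfl fun i _ => ?_
  rw [Finset.mul_sum]
  exact Finset.sum_congr rfl fun j _ => by rw [hI, hI]; ring

end Torsion

end SSFinsler

open SSFinsler in
/-- The explicit semi-C-reducibility formula for a
spherically symmetric metric `F = uφ(r,s)`. -/
theorem semi_C_reducible_explicit_spherically_symmetric
    {n : ℕ} (hn : 3 ≤ n) (φ : ℝ → ℝ → ℝ)
    (hφ : ContDiff ℝ (⊤ : ℕ∞) (fun p : ℝ × ℝ => φ p.1 p.2))
    (x y : Fin n → ℝ) (hy : y ≠ 0)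
    (hposdef : (gsMat φ x y).PosDef)
    (hφpos : 0 < φ (nrm x) (ip x y / nrm y))
    (hσ1 : φ (nrm x) (ip x y / nrm y) -
        (ip x y / nrm y) * psd φ (nrm x) (ip x y / nrm y) ≠ 0)
    (hσ1' : φ (nrm x) (ip x y / nrm y) -
          (ip x y / nrm y) * psd φ (nrm x) (ip x y / nrm y) +
        ((nrm x) ^ 2 - (ip x y / nrm y) ^ 2) * psd (psd φ) (nrm x) (ip x y / nrm y) ≠ 0)
    (hI : normI2s φ x y ≠ 0)
    (hD : (((n : ℝ) + 1) *
            ((φ (nrm x) (ip x y / nrm y) -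
                  (ip x y / nrm y) * psd φ (nrm x) (ip x y / nrm y)) *
                psd φ (nrm x) (ip x y / nrm y) -
              (ip x y / nrm y) * φ (nrm x) (ip x y / nrm y) *
                psd (psd φ) (nrm x) (ip x y / nrm y)) *
            (φ (nrm x) (ip x y / nrm y) -
                (ip x y / nrm y) * psd φ (nrm x) (ip x y / nrm y) +
              ((nrm x) ^ 2 - (ip x y / nrm y) ^ 2) *
                psd (psd φ) (nrm x) (ip x y / nrm y)) +
          ((nrm x) ^ 2 - (ip x y / nrm y) ^ 2) *
            ((φ (nrm x) (ip x y / nrm y) -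
                  (ip x y / nrm y) * psd φ (nrm x) (ip x y / nrm y)) *
                psd (psd (psd φ)) (nrm x) (ip x y / nrm y) +
              3 * (ip x y / nrm y) * psd (psd φ) (nrm x) (ip x y / nrm y) ^ 2) *
            φ (nrm x) (ip x y / nrm y)) ≠ 0) :
    ∀ i j k : Fin n,
      carts φ x y i j k =
        let r := nrm x
        let s := ip x y / nrm y
        let p := φ r s
        let ps := psd φ r s
        let pss := psd (psd φ) r s
        let psss := psd (psd (psd φ)) r s
        let D := ((n : ℝ) + 1) * ((p - s * ps) * ps - s * p * pss) *
              (p - s * ps + (r ^ 2 - s ^ 2) * pss) +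
            (r ^ 2 - s ^ 2) * ((p - s * ps) * psss + 3 * s * pss ^ 2) * p
        let P := ((n : ℝ) + 1) * ((p - s * ps) * ps - s * p * pss) *
              (p - s * ps + (r ^ 2 - s ^ 2) * pss) / D
        let Q := (r ^ 2 - s ^ 2) * ((p - s * ps) * psss + 3 * s * pss ^ 2) * p / D
        P / ((n : ℝ) + 1) *
            (angs φ x y i j * mcis φ x y k + angs φ x y j k * mcis φ x y i +
              angs φ x y k i * mcis φ x y j) +
        Q / normI2s φ x y * (mcis φ x y i * mcis φ x y j * mcis φ x y k) := by
  -- the hypotheses and the goal involve `r`, `s`, `φ` and its derivatives only through these values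
  obtain ⟨s, hs⟩ : ∃ s, ip x y / nrm y = s := ⟨_, rfl⟩
  obtain ⟨p, hp⟩ : ∃ p, φ (nrm x) s = p := ⟨_, rfl⟩
  obtain ⟨p', hp'⟩ : ∃ p', psd φ (nrm x) s = p' := ⟨_, rfl⟩
  obtain ⟨q, hq⟩ : ∃ q, psd (psd φ) (nrm x) s = q := ⟨_, rfl⟩
  obtain ⟨t, ht⟩ : ∃ t, psd (psd (psd φ)) (nrm x) s = t := ⟨_, rfl⟩
  obtain ⟨ρ, hρ⟩ : ∃ ρ, nrm x ^ 2 - s ^ 2 = ρ := ⟨_, rfl⟩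
  obtain ⟨σ, hσ⟩ : ∃ σ, p - s * p' = σ := ⟨_, rfl⟩
  obtain ⟨τ, hτ⟩ : ∃ τ, σ + ρ * q = τ := ⟨_, rfl⟩
  obtain ⟨D, hDe⟩ : ∃ D, ((n : ℝ) + 1) * (σ * p' - s * p * q) * τ
    + ρ * (σ * t + 3 * s * q ^ 2) * p = D := ⟨_, rfl⟩
  have hs' : sv x y = s := hs
  simp only [hs, hp, hp', hq, ht, hρ, hσ, hτ, hDe] at hφpos hσ1 hσ1' hD ⊢
  have hp0 : p ≠ 0 := hφpos.ne'
  have hu : nrm y ≠ 0 := (nrm_pos hy).ne'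
  obtain ⟨hIk, hI2⟩ := torsion_eq (x := x) hφ hy hposdef.det_pos.ne'.isUnit s p p' q t σ ρ τ D
    hs' hp hp' hq ht hσ hρ hτ hDe hp0 hσ1 hσ1'
  have hρ0 : ρ ≠ 0 := by
    rintro rfl
    exact hI (by rw [hI2]; simp)
  have hn1 : (n : ℝ) + 1 ≠ 0 := by positivity
  intro i j k
  rw [carts_eq hφ hy, hI2, hIk, hIk, hIk, angs_eq hφ hy, angs_eq hφ hy, angs_eq hφ hy,
    hs', hp, hp', hq, ht, hσ, av_symm k i]
  field_simp
  rw [← hσ]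
  ring
end
end
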